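/- Let p ∈ (0,1) and let A, B be n×n Hermitian (or real symmetric) matrices with eigenvalues λ_1(A),…,λ_n(A) and λ_1(B),…,λ_n(B), and let λ_1(A−B),…,λ_n(A−B) be the eigenvalues of A−B. Then for every t ∈ ℝ, | Σ_{i=1}^n (t − λ_i(A))_+^p − Σ_{i=1}^n (t − λ_i(B))_+^p | ≤ Σ_{i=1}^n | λ_i(A−B) |^p. Furthermore, with C_p = √π (p+1) Γ((p+1)/2) / Γ(1 + p/2), one has d(μ_A, μ_B) ≤ (C_p/n) ‖A−B‖_{ℓ^p}^p, i.e. for every z ∈ 𝒦, | g_{μ_A}(z) − g_{μ_B}(z) | ≤ (C_p/n) ‖A−B‖_{ℓ^p}^p. -/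

import Mathlib

open MeasureTheory Filter Topology

noncomputable section

variable {𝕜 : Type*} [RCLike 𝕜]

/-- The space `H_n^(β)` of self-adjoint `n × n` matrices over `𝕜`. -/
abbrev HermMat (𝕜 : Type*) [RCLike 𝕜] (n : ℕ) := selfAdjoint (Matrix (Fin n) (Fin n) 𝕜)

def hermEntry {n : ℕ} (A : HermMat 𝕜 n) (i j : Fin n) : 𝕜 :=
  (A : Matrix (Fin n) (Fin n) 𝕜) i j

lemma herm_isHermitian {n : ℕ} (A : HermMat 𝕜 n) :
    (A : Matrix (Fin n) (Fin n) 𝕜).IsHermitian := by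
  simpa [Matrix.IsHermitian, ← Matrix.star_eq_conjTranspose] using A.2.star_eq

/-- The eigenvalues of a self-adjoint matrix. -/
def eigs {n : ℕ} (A : HermMat 𝕜 n) : Fin n → ℝ := (herm_isHermitian A).eigenvalues

/-- The empirical spectral measure `μ_A = (1/n) ∑ δ_{λ_i}`. -/
def specMeasure {n : ℕ} (A : HermMat 𝕜 n) : Measure ℝ :=
  ((n : ENNReal))⁻¹ • ∑ i : Fin n, Measure.dirac (eigs A i)

/-- `‖Y‖_{ℓ^p}^p = ∑_{i,j} ‖Y_{i,j}‖^p`. -/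
def matLpNormPow (p : ℝ) {n : ℕ} (A : HermMat 𝕜 n) : ℝ :=
  ∑ i, ∑ j, ‖hermEntry A i j‖ ^ p

/-- The Stieltjes transform `g_μ(z) = ∫ dμ(t)/(z - t)`. -/
def stieltjesT (μ : Measure ℝ) (z : ℂ) : ℂ := ∫ t, (z - (t : ℂ))⁻¹ ∂μ

/-- The constant `C_p = √π (p+1) Γ((p+1)/2) / Γ(1+p/2)`. -/
def Cp (p : ℝ) : ℝ :=
  Real.sqrt Real.pi * (p + 1) * Real.Gamma ((p + 1) / 2) / Real.Gamma (1 + p / 2)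

lemma log_one_add_le_rpow_div {q y : ℝ} (hq : 0 < q) (hq1 : q ≤ 1) (hy : 0 ≤ y) :
    Real.log (1 + y) ≤ y ^ q / q := by
  have h1 : (1 + y) ^ q ≤ 1 + y ^ q := by
    simpa only [Real.one_rpow] using Real.rpow_add_le_add_rpow zero_le_one hy hq.le hq1
  have h2 : q * Real.log (1 + y) ≤ y ^ q := by
    rw [← Real.log_rpow (by positivity)]
    linarith [Real.log_le_sub_one_of_pos (show 0 < (1 + y) ^ q by positivity)]
  rw [le_div_iff₀ hq]; linarith

/-- The kernel whose Mellin-type integral reproduces `x ^ p`. -/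
def logKernel (p x r : ℝ) : ℝ := Real.log (1 + r * x) * r ^ (-p - 1)

lemma logKernel_nonneg {p x r : ℝ} (hx : 0 ≤ x) (hr : 0 < r) : 0 ≤ logKernel p x r :=
  mul_nonneg (Real.log_nonneg (by nlinarith)) (Real.rpow_nonneg hr.le _)

lemma continuousOn_logKernel {p x : ℝ} (hx : 0 ≤ x) :
    ContinuousOn (logKernel p x) (Set.Ioi 0) := by
  intro r hr
  have hr : 0 < r := hr
  refine ContinuousAt.continuousWithinAt ?_
  refine ContinuousAt.mul ?_ (Real.continuousAt_rpow_const _ _ (Or.inl hr.ne'))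
  exact ContinuousAt.log (by fun_prop) (by positivity)

lemma integrableOn_logKernel {p x : ℝ} (hp0 : 0 < p) (hp1 : p < 1) (hx : 0 ≤ x) :
    IntegrableOn (logKernel p x) (Set.Ioi 0) := by
  have hb {q r : ℝ} (hq : 0 < q) (hq1 : q ≤ 1) (hr : 0 < r) :
      ‖logKernel p x r‖ ≤ x ^ q / q * r ^ (q - p - 1) := by
    rw [Real.norm_of_nonneg (logKernel_nonneg hx hr), logKernel]
    calc _ ≤ (r * x) ^ q / q * r ^ (-p - 1) := by
          gcongr
          exact log_one_add_le_rpow_div hq hq1 (by positivity)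
      _ = _ := by
          rw [Real.mul_rpow hr.le hx, show q - p - 1 = q + (-p - 1) by ring, Real.rpow_add hr]
          ring
  have hm : AEStronglyMeasurable (logKernel p x) (volume.restrict (Set.Ioi 0)) :=
    (continuousOn_logKernel hx).aestronglyMeasurable measurableSet_Ioi
  rw [← Set.Ioc_union_Ioi_eq_Ioi zero_le_one]
  refine IntegrableOn.union ?_ ?_
  · have hi : IntegrableOn (fun r : ℝ => x ^ (1 : ℝ) / 1 * r ^ (1 - p - 1)) (Set.Ioc 0 1) := by
      refine Integrable.const_mul ?_ _
      exact ((intervalIntegrable_iff_integrableOn_Ioc_of_le zero_le_one).1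
        (intervalIntegral.intervalIntegrable_rpow' (by linarith)))
    refine Integrable.mono' hi (hm.mono_set Set.Ioc_subset_Ioi_self) ?_
    exact (ae_restrict_iff' measurableSet_Ioc).2 (ae_of_all _ fun r hr => hb one_pos le_rfl hr.1)
  · have hi : IntegrableOn (fun r : ℝ => x ^ (p / 2) / (p / 2) * r ^ (p / 2 - p - 1))
        (Set.Ioi 1) :=
      (integrableOn_Ioi_rpow_of_lt (by linarith) one_pos).const_mul _
    refine Integrable.mono' hi (hm.mono_set (Set.Ioi_subset_Ioi zero_le_one)) ?_
    exact (ae_restrict_iff' measurableSet_Ioi).2 (ae_of_all _ fun r hr =>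
      hb (by positivity) (by linarith) (one_pos.trans hr))

lemma integral_logKernel {p x : ℝ} (hp0 : 0 < p) (hx : 0 ≤ x) :
    ∫ r in Set.Ioi 0, logKernel p x r = x ^ p * ∫ r in Set.Ioi 0, logKernel p 1 r := by
  rcases hx.eq_or_lt with rfl | hx
  · simp [logKernel, Real.zero_rpow hp0.ne']
  have h := integral_comp_mul_left_Ioi' (logKernel p 1) 0 hx
  rw [mul_zero] at h
  rw [← h, smul_eq_mul, ← mul_assoc, ← integral_const_mul]
  refine setIntegral_congr_fun measurableSet_Ioi fun r hr => ?_
  have hr : 0 < r := hr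
  simp only [logKernel]
  rw [Real.mul_rpow hx.le hr.le, mul_one, mul_comm x r]
  have : x ^ p * x * x ^ (-p - 1) = 1 := by
    nth_rewrite 2 [← Real.rpow_one x]
    rw [← Real.rpow_add hx, ← Real.rpow_add hx]
    ring_nf
    simp
  linear_combination (-Real.log (1 + r * x) * r ^ (-p - 1)) * this

lemma integral_logKernel_one_pos {p : ℝ} (hp0 : 0 < p) (hp1 : p < 1) :
    0 < ∫ r in Set.Ioi 0, logKernel p 1 r := by
  have hpos {r : ℝ} (hr : 0 < r) : 0 < logKernel p 1 r :=
    mul_pos (Real.log_pos (by linarith)) (Real.rpow_pos_of_pos hr _)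
  rw [setIntegral_pos_iff_support_of_nonneg_ae
    ((ae_restrict_iff' measurableSet_Ioi).2 (ae_of_all _ fun r hr => (hpos hr).le))
    (integrableOn_logKernel hp0 hp1 zero_le_one)]
  have : Set.Ioi 0 ⊆ Function.support (logKernel p 1) ∩ Set.Ioi 0 :=
    fun r hr => ⟨(hpos hr).ne', hr⟩
  exact lt_of_lt_of_le (by simp) (measure_mono this)

/-- If `log (1 + r ·)`-sums are dominated for all `r > 0`, so are the sums of `p`-th powers. -/
lemma sum_rpow_le_of_log_le {ι κ : Type*} {s : Finset ι} {t : Finset κ} {p : ℝ} (hp0 : 0 < p)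
    (hp1 : p < 1) {a : ι → ℝ} {b : κ → ℝ} (ha : ∀ i ∈ s, 0 ≤ a i) (hb : ∀ i ∈ t, 0 ≤ b i)
    (h : ∀ r : ℝ, 0 < r → ∑ i ∈ s, Real.log (1 + r * a i) ≤ ∑ i ∈ t, Real.log (1 + r * b i)) :
    ∑ i ∈ s, a i ^ p ≤ ∑ i ∈ t, b i ^ p := by
  have hia : ∀ i ∈ s, IntegrableOn (logKernel p (a i)) (Set.Ioi 0) :=
    fun i hi => integrableOn_logKernel hp0 hp1 (ha i hi)
  have hib : ∀ i ∈ t, IntegrableOn (logKernel p (b i)) (Set.Ioi 0) :=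
    fun i hi => integrableOn_logKernel hp0 hp1 (hb i hi)
  have key : ∫ r in Set.Ioi 0, ∑ i ∈ s, logKernel p (a i) r ≤
      ∫ r in Set.Ioi 0, ∑ i ∈ t, logKernel p (b i) r := by
    refine setIntegral_mono_on (integrable_finsetSum _ hia) (integrable_finsetSum _ hib)
      measurableSet_Ioi fun r hr => ?_
    simp only [logKernel, ← Finset.sum_mul]
    exact mul_le_mul_of_nonneg_right (h r hr) (Real.rpow_nonneg (le_of_lt hr) _)
  rw [integral_finsetSum _ hia, integral_finsetSum _ hib,
    Finset.sum_congr rfl fun i hi => integral_logKernel hp0 (ha i hi),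
    Finset.sum_congr rfl fun i hi => integral_logKernel hp0 (hb i hi),
    ← Finset.sum_mul, ← Finset.sum_mul] at key
  exact le_of_mul_le_mul_right key (integral_logKernel_one_pos hp0 hp1)

/-- The kernel `(-i (z - t)) ^ (-(p + 2))`. -/
def stieltjesKernel (p : ℝ) (z : ℂ) (t : ℝ) : ℂ :=
  (-Complex.I * (z - t)) ^ ((-(p + 2) : ℝ) : ℂ)

lemma neg_I_mul_sub_re (z : ℂ) (t : ℝ) : (-Complex.I * (z - t)).re = z.im := by simp

lemma continuous_stieltjesKernel (p : ℝ) {z : ℂ} (hz : 0 < z.im) :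
    Continuous (stieltjesKernel p z) := by
  refine Continuous.cpow (by fun_prop) continuous_const fun t => Or.inl ?_
  rwa [neg_I_mul_sub_re]

lemma norm_stieltjesKernel (p : ℝ) (z : ℂ) (t : ℝ) :
    ‖stieltjesKernel p z t‖ = ‖z - t‖ ^ (-(p + 2)) := by
  rw [stieltjesKernel, Complex.norm_cpow_real]; simp

lemma im_le_norm_sub (z : ℂ) (t : ℝ) : z.im ≤ ‖z - t‖ := by
  simpa using (le_abs_self _).trans (Complex.abs_im_le_norm (z - t))

lemma norm_sub_ofReal_rpow_neg_two {z : ℂ} (hz : 0 < z.im) (t : ℝ) :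
    ‖z - t‖ ^ (-2 : ℝ) = (z.im ^ 2)⁻¹ * (1 + ((t - z.re) / z.im) ^ 2)⁻¹ := by
  rw [Real.rpow_neg (norm_nonneg _), Real.rpow_two, Complex.sq_norm, ← mul_inv]
  congr 1
  rw [Complex.normSq_apply]
  simp
  field_simp
  ring

lemma integrable_norm_sub_rpow_neg_two {z : ℂ} (hz : 0 < z.im) :
    Integrable fun t : ℝ => ‖z - t‖ ^ (-2 : ℝ) := by
  simp_rw [norm_sub_ofReal_rpow_neg_two hz]
  exact ((integrable_inv_one_add_sq.comp_div hz.ne').comp_sub_right z.re).const_mul _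

lemma integral_norm_sub_rpow_neg_two {z : ℂ} (hz : 0 < z.im) :
    ∫ t : ℝ, ‖z - t‖ ^ (-2 : ℝ) = Real.pi / z.im := by
  simp_rw [norm_sub_ofReal_rpow_neg_two hz]
  rw [integral_const_mul, integral_sub_right_eq_self (fun t : ℝ => (1 + (t / z.im) ^ 2)⁻¹) z.re,
    Measure.integral_comp_div (fun t : ℝ => (1 + t ^ 2)⁻¹), integral_univ_inv_one_add_sq,
    abs_of_pos hz, smul_eq_mul]
  field_simp

lemma integrable_posPart_rpow_mul_stieltjesKernel {p : ℝ} (hp0 : 0 < p) {z : ℂ} (hz : 0 < z.im)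
    (l : ℝ) :
    Integrable fun t : ℝ => ((max (t - l) 0 ^ p : ℝ) : ℂ) * stieltjesKernel p z t := by
  have hc : Continuous fun t : ℝ => ((max (t - l) 0 ^ p : ℝ) : ℂ) * stieltjesKernel p z t := by
    refine Continuous.mul (Complex.continuous_ofReal.comp ?_) (continuous_stieltjesKernel p hz)
    exact Continuous.rpow_const (by fun_prop) fun _ => Or.inr hp0.le
  refine Integrable.mono' ((integrable_norm_sub_rpow_neg_two hz).const_mul
    ((‖z - l‖ / z.im + 1) ^ p)) hc.aestronglyMeasurable (ae_of_all _ fun t => ?_)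
  have hpos : 0 < ‖z - t‖ := hz.trans_le (im_le_norm_sub z t)
  have h1 : max (t - l) 0 ≤ (‖z - l‖ / z.im + 1) * ‖z - t‖ := by
    refine max_le ?_ (by positivity)
    have h2 : t - l ≤ ‖z - l‖ + ‖z - t‖ := by
      have := norm_sub_le (z - l) (z - t)
      rw [show z - l - (z - t) = ((t - l : ℝ) : ℂ) by push_cast; ring, Complex.norm_real] at this
      exact (le_abs_self _).trans this
    have h3 : ‖z - l‖ ≤ ‖z - l‖ / z.im * ‖z - t‖ := by
      rw [div_mul_eq_mul_div, le_div_iff₀ hz]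
      exact mul_le_mul_of_nonneg_left (im_le_norm_sub z t) (norm_nonneg _)
    linarith
  rw [norm_mul, norm_stieltjesKernel, Complex.norm_real,
    Real.norm_of_nonneg (by positivity)]
  calc _ ≤ ((‖z - l‖ / z.im + 1) * ‖z - t‖) ^ p * ‖z - t‖ ^ (-(p + 2)) := by gcongr
    _ = _ := by
      rw [Real.mul_rpow (by positivity) hpos.le, mul_assoc, ← Real.rpow_add hpos]
      ring_nf

lemma cpow_ofReal_mul {r : ℝ} (hr : 0 < r) {x : ℂ} (hx : x ≠ 0) (s : ℝ) :
    ((r : ℂ) * x) ^ (s : ℂ) = ((r ^ s : ℝ) : ℂ) * x ^ (s : ℂ) := by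
  have hr' : (r : ℂ) ≠ 0 := by exact_mod_cast hr.ne'
  rw [Complex.ofReal_cpow hr.le, Complex.cpow_def_of_ne_zero (mul_ne_zero hr' hx),
    Complex.cpow_def_of_ne_zero hr', Complex.cpow_def_of_ne_zero hx, Complex.log_ofReal_mul hr hx,
    add_mul, Complex.exp_add, Complex.ofReal_log hr.le]

lemma integral_posPart_rpow_mul_stieltjesKernel {p : ℝ} (hp0 : 0 < p) {z : ℂ} (hz : 0 < z.im)
    (l : ℝ) :
    (∫ t : ℝ, ((max (t - l) 0 ^ p : ℝ) : ℂ) * stieltjesKernel p z t) *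
      ((p + 1 : ℝ) * (-Complex.I * (z - l))) = Complex.I ^ ((-(p + 1) : ℝ) : ℂ) := by
  set G : ℝ → ℂ := fun t => (((t - l) ^ (p + 1) : ℝ) : ℂ) *
    (-Complex.I * (z - t)) ^ ((-(p + 1) : ℝ) : ℂ) with hG
  have hslit (t : ℝ) : -Complex.I * (z - t) ∈ Complex.slitPlane :=
    Or.inl (by rwa [neg_I_mul_sub_re])
  have hderiv : ∀ t ∈ Set.Ici l, HasDerivAt G
      (((max (t - l) 0 ^ p : ℝ) : ℂ) * stieltjesKernel p z t *
        ((p + 1 : ℝ) * (-Complex.I * (z - l)))) t := by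
    intro t ht
    have ht : l ≤ t := ht
    have h1 : HasDerivAt (fun t : ℝ => (((t - l) ^ (p + 1) : ℝ) : ℂ))
        (((p + 1) * (t - l) ^ p : ℝ) : ℂ) t := by
      have := ((hasDerivAt_id t).sub_const l).rpow_const (p := p + 1) (Or.inr (by linarith))
      simpa using this.ofReal_comp
    have h2 : HasDerivAt (fun t : ℝ => (-Complex.I * (z - t)) ^ ((-(p + 1) : ℝ) : ℂ))
        (((-(p + 1) : ℝ) : ℂ) * (-Complex.I * (z - t)) ^ (((-(p + 1) : ℝ) : ℂ) - 1) *
          Complex.I) t := by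
      have h3 : HasDerivAt (fun w : ℂ => -Complex.I * (z - w)) Complex.I (t : ℂ) := by
        simpa using ((hasDerivAt_id (t : ℂ)).const_sub z).const_mul (-Complex.I)
      exact (h3.cpow_const (hslit t)).comp_ofReal
    refine (h1.mul h2).congr_deriv ?_
    have hne : -Complex.I * (z - t) ≠ 0 := Complex.slitPlane_ne_zero (hslit t)
    have e1 : (((-(p + 1) : ℝ) : ℂ) - 1) = ((-(p + 2) : ℝ) : ℂ) := by push_cast; ring
    have e2 : (-Complex.I * (z - t)) ^ ((-(p + 1) : ℝ) : ℂ) =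
        stieltjesKernel p z t * (-Complex.I * (z - t)) := by
      rw [stieltjesKernel, show ((-(p + 1) : ℝ) : ℂ) = ((-(p + 2) : ℝ) : ℂ) + 1 by push_cast; ring,
        Complex.cpow_add _ _ hne, Complex.cpow_one]
    have e3 : (t - l) ^ (p + 1) = (t - l) ^ p * (t - l) := by
      rw [Real.rpow_add_one' (by linarith) (by linarith)]
    rw [e1, e2, ← stieltjesKernel, e3, max_eq_left (by linarith)]
    push_cast
    ring
  have hlim : Tendsto G atTop (𝓝 (Complex.I ^ ((-(p + 1) : ℝ) : ℂ))) := by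
    have hinv : Tendsto (fun t : ℝ => (((t - l)⁻¹ : ℝ) : ℂ)) atTop (𝓝 0) := by
      have : Tendsto (fun t : ℝ => (t - l)⁻¹) atTop (𝓝 0) :=
        tendsto_inv_atTop_zero.comp (tendsto_atTop_add_const_right _ (-l) tendsto_id)
      exact_mod_cast (Complex.continuous_ofReal.tendsto 0).comp this
    have hbase : Tendsto (fun t : ℝ => Complex.I - Complex.I * (z - l) * (((t - l)⁻¹ : ℝ) : ℂ))
        atTop (𝓝 Complex.I) := by
      simpa using (hinv.const_mul (Complex.I * (z - l))).const_sub Complex.I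
    have hI : Complex.I ∈ Complex.slitPlane := Or.inr (by simp)
    refine Tendsto.congr' ?_ ((continuousAt_cpow_const hI).tendsto.comp hbase)
    filter_upwards [eventually_gt_atTop l] with t ht
    have htl : 0 < t - l := sub_pos.2 ht
    have htl' : (t : ℂ) - l ≠ 0 := by exact_mod_cast htl.ne'
    have hfac : -Complex.I * (z - t) = ((t - l : ℝ) : ℂ) *
        (Complex.I - Complex.I * (z - l) * (((t - l)⁻¹ : ℝ) : ℂ)) := by
      push_cast
      field_simp
      ring
    have hne := Complex.slitPlane_ne_zero (hslit t)
    rw [hfac] at hne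
    simp only [hG, Function.comp_apply]
    rw [hfac, cpow_ofReal_mul htl (right_ne_zero_of_mul hne), ← mul_assoc, ← Complex.ofReal_mul,
      ← Real.rpow_add htl]
    simp
  have hint := integrable_posPart_rpow_mul_stieltjesKernel hp0 hz l
  have hFTC := integral_Ioi_of_hasDerivAt_of_tendsto' hderiv
    ((hint.mul_const _).integrableOn) hlim
  have hGl : G l = 0 := by simp [hG, Real.zero_rpow (show p + 1 ≠ 0 by linarith)]
  rw [hGl, sub_zero, integral_mul_const] at hFTC
  rw [← hFTC]
  congr 1
  rw [setIntegral_eq_integral_of_forall_compl_eq_zero]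
  intro t ht
  have ht : t ≤ l := by simpa using ht
  rw [max_eq_right (by linarith), Real.zero_rpow hp0.ne']
  simp

/-- Representation of `(z - l)⁻¹` through the functions `(t - l)₊ ^ p`. -/
lemma exists_inv_sub_eq_integral {p : ℝ} (hp0 : 0 < p) {z : ℂ} (hz : 0 < z.im) :
    ∃ w : ℂ, ‖w‖ = p + 1 ∧ ∀ l : ℝ, (z - l)⁻¹ =
      w * ∫ t : ℝ, ((max (t - l) 0 ^ p : ℝ) : ℂ) * stieltjesKernel p z t := by
  have hne : Complex.I ^ ((-(p + 1) : ℝ) : ℂ) ≠ 0 := by simp [Complex.cpow_eq_zero_iff]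
  refine ⟨(p + 1 : ℝ) * -Complex.I / Complex.I ^ ((-(p + 1) : ℝ) : ℂ), ?_, fun l => ?_⟩
  · rw [norm_div, norm_mul, Complex.norm_cpow_real, Complex.norm_real,
      Real.norm_of_nonneg (by linarith)]
    simp
  · have h := integral_posPart_rpow_mul_stieltjesKernel hp0 hz l
    rw [inv_eq_of_mul_eq_one_right]
    rw [div_mul_eq_mul_div, mul_div_assoc', div_eq_one_iff_eq hne, ← h]
    ring

lemma one_le_Gamma_div_Gamma {p : ℝ} (hp0 : 0 < p) (hp1 : p < 1) :
    1 ≤ Real.Gamma ((p + 1) / 2) / Real.Gamma (1 + p / 2) := by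
  have h1 : 1 ≤ Real.Gamma ((p + 1) / 2) := by
    refine Real.Gamma_one.ge.trans ?_
    exact Real.Gamma_strictAntiOn_Ioc.antitoneOn ⟨by linarith, by linarith⟩ (by simp) (by linarith)
  have h2 : Real.Gamma (1 + p / 2) ≤ 1 := by
    have := Real.convexOn_Gamma.2 (Set.mem_Ioi.2 one_pos) (Set.mem_Ioi.2 two_pos)
      (show 0 ≤ 1 - p / 2 by linarith) (show 0 ≤ p / 2 by linarith) (by ring)
    simp only [smul_eq_mul, Real.Gamma_one, Real.Gamma_two] at this
    rw [show 1 + p / 2 = (1 - p / 2) * 1 + p / 2 * 2 by ring]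
    linarith
  rw [le_div_iff₀ (Real.Gamma_pos_of_pos (by linarith))]
  linarith

/-- Comparison of two Stieltjes sums from a uniform comparison of truncated power sums. -/
lemma norm_sum_inv_sub_le {ι : Type*} (s : Finset ι) {p : ℝ} (hp0 : 0 < p) {z : ℂ}
    (hz : 2 ≤ z.im) (a b : ι → ℝ) {R : ℝ}
    (hR : ∀ t : ℝ, |(∑ i ∈ s, max (t - a i) 0 ^ p) - ∑ i ∈ s, max (t - b i) 0 ^ p| ≤ R) :
    ‖(∑ i ∈ s, (z - a i)⁻¹) - ∑ i ∈ s, (z - b i)⁻¹‖ ≤ (p + 1) * (R * (Real.pi / 2)) := by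
  have hz0 : 0 < z.im := by linarith
  have hR0 : 0 ≤ R := (abs_nonneg _).trans (hR 0)
  obtain ⟨w, hw, hrep⟩ := exists_inv_sub_eq_integral hp0 hz0
  have hint := integrable_posPart_rpow_mul_stieltjesKernel hp0 hz0
  simp_rw [hrep]
  rw [← Finset.mul_sum, ← Finset.mul_sum, ← mul_sub, norm_mul, hw,
    ← integral_finsetSum _ fun i _ => hint (a i), ← integral_finsetSum _ fun i _ => hint (b i),
    ← integral_sub (integrable_finsetSum _ fun i _ => hint (a i))
      (integrable_finsetSum _ fun i _ => hint (b i))]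
  refine mul_le_mul_of_nonneg_left ?_ (by linarith)
  calc _ ≤ ∫ t : ℝ, R * ‖z - t‖ ^ (-2 : ℝ) := by
        refine norm_integral_le_of_norm_le ((integrable_norm_sub_rpow_neg_two hz0).const_mul R)
          (ae_of_all _ fun t => ?_)
        rw [← Finset.sum_mul, ← Finset.sum_mul, ← sub_mul, norm_mul, norm_stieltjesKernel]
        refine mul_le_mul ?_ ?_ (by positivity) hR0
        · rw [← Complex.ofReal_sum, ← Complex.ofReal_sum, ← Complex.ofReal_sub, Complex.norm_real]
          exact hR t
        · exact Real.rpow_le_rpow_of_exponent_le (by linarith [im_le_norm_sub z t]) (by linarith)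
    _ = R * (Real.pi / z.im) := by rw [integral_const_mul, integral_norm_sub_rpow_neg_two hz0]
    _ ≤ _ := by gcongr

section MatrixInequalities

open scoped ComplexOrder Matrix

/-- The matrix `U diag(a) Uᴴ`. -/
def spectralConj {n : ℕ} (U : Matrix.unitaryGroup (Fin n) 𝕜) (a : Fin n → ℝ) :
    Matrix (Fin n) (Fin n) 𝕜 :=
  (U : Matrix (Fin n) (Fin n) 𝕜) * Matrix.diagonal (fun i => (a i : 𝕜)) *
    (U : Matrix (Fin n) (Fin n) 𝕜)ᴴ

section SpectralConj

variable {n : ℕ} (U : Matrix.unitaryGroup (Fin n) 𝕜)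

lemma conjTranspose_mul_unitary :
    (U : Matrix (Fin n) (Fin n) 𝕜)ᴴ * (U : Matrix (Fin n) (Fin n) 𝕜) = 1 :=
  Matrix.mem_unitaryGroup_iff'.1 U.2

lemma unitary_mul_conjTranspose :
    (U : Matrix (Fin n) (Fin n) 𝕜) * (U : Matrix (Fin n) (Fin n) 𝕜)ᴴ = 1 :=
  Matrix.mem_unitaryGroup_iff.1 U.2

lemma spectralConj_mul (a b : Fin n → ℝ) :
    spectralConj U a * spectralConj U b = spectralConj U (a * b) := by
  have h := conjTranspose_mul_unitary U
  unfold spectralConj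
  calc _ = (U : Matrix (Fin n) (Fin n) 𝕜) * Matrix.diagonal (fun i => (a i : 𝕜)) *
        ((U : Matrix (Fin n) (Fin n) 𝕜)ᴴ * (U : Matrix (Fin n) (Fin n) 𝕜)) *
        Matrix.diagonal (fun i => (b i : 𝕜)) * (U : Matrix (Fin n) (Fin n) 𝕜)ᴴ := by
        simp only [Matrix.mul_assoc]
    _ = _ := by
        rw [h, Matrix.mul_one, Matrix.mul_assoc (U : Matrix (Fin n) (Fin n) 𝕜),
          Matrix.diagonal_mul_diagonal]
        simp

lemma spectralConj_sub (a b : Fin n → ℝ) :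
    spectralConj U (a - b) = spectralConj U a - spectralConj U b := by
  unfold spectralConj
  rw [← Matrix.sub_mul, ← Matrix.mul_sub, Matrix.diagonal_sub]
  simp

lemma spectralConj_const (c : ℝ) :
    spectralConj U (fun _ => c) = (c : 𝕜) • (1 : Matrix (Fin n) (Fin n) 𝕜) := by
  have : Matrix.diagonal (fun _ : Fin n => (c : 𝕜)) = (c : 𝕜) • 1 := by
    rw [Matrix.smul_one_eq_diagonal]
  rw [spectralConj, this, Matrix.mul_smul, Matrix.smul_mul, Matrix.mul_one,
    unitary_mul_conjTranspose]

lemma smul_spectralConj (c : ℝ) (a : Fin n → ℝ) :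
    (c : 𝕜) • spectralConj U a = spectralConj U (fun i => c * a i) := by
  rw [spectralConj, spectralConj, ← Matrix.smul_mul, ← Matrix.mul_smul, ← Matrix.diagonal_smul]
  congr; ext i; simp

lemma det_one_add_spectralConj (a : Fin n → ℝ) :
    (1 + spectralConj U a).det = ((∏ i, (1 + a i) : ℝ) : 𝕜) := by
  rw [spectralConj, Matrix.mul_assoc, Matrix.det_one_add_mul_comm, Matrix.mul_assoc,
    conjTranspose_mul_unitary, Matrix.mul_one, ← Matrix.diagonal_one, Matrix.diagonal_add,
    Matrix.det_diagonal]
  simp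

lemma spectralConj_posSemidef {a : Fin n → ℝ} (ha : ∀ i, 0 ≤ a i) :
    (spectralConj U a).PosSemidef := by
  refine Matrix.PosSemidef.mul_mul_conjTranspose_same (.diagonal fun i => ?_) _
  exact RCLike.ofReal_nonneg.2 (ha i)

end SpectralConj

variable {n : ℕ}

lemma isHermitian_eq_spectralConj {M : Matrix (Fin n) (Fin n) 𝕜} (hM : M.IsHermitian) :
    M = spectralConj hM.eigenvectorUnitary hM.eigenvalues := by
  conv_lhs => rw [hM.spectral_theorem]
  rfl

lemma one_le_det_one_add {M : Matrix (Fin n) (Fin n) 𝕜} (hM : M.PosSemidef) :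
    1 ≤ (1 + M).det := by
  rw [isHermitian_eq_spectralConj hM.isHermitian, det_one_add_spectralConj]
  rw [← RCLike.ofReal_one, RCLike.ofReal_le_ofReal]
  simpa using Finset.prod_le_prod (s := Finset.univ) (f := fun _ : Fin n => (1 : ℝ))
    (fun _ _ => zero_le_one) fun i _ => by linarith [hM.eigenvalues_nonneg i]

lemma posDef_one_add {M : Matrix (Fin n) (Fin n) 𝕜} (hM : M.PosSemidef) : (1 + M).PosDef :=
  Matrix.PosDef.one.add_posSemidef hM

lemma exists_factor_of_posSemidef {M : Matrix (Fin n) (Fin n) 𝕜} (hM : M.PosSemidef) :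
    ∃ S : Matrix (Fin n) (Fin n) 𝕜, M = Sᴴ * S := by
  refine ⟨spectralConj hM.isHermitian.eigenvectorUnitary
    (fun i => √(hM.isHermitian.eigenvalues i)), ?_⟩
  rw [(spectralConj_posSemidef _ fun i => Real.sqrt_nonneg _).isHermitian.eq, spectralConj_mul]
  conv_lhs => rw [isHermitian_eq_spectralConj hM.isHermitian]
  congr 1
  ext i
  simp [Real.mul_self_sqrt (hM.eigenvalues_nonneg i)]

lemma det_one_add_add_conjTranspose_mul_self {M : Matrix (Fin n) (Fin n) 𝕜} (hM : M.PosSemidef)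
    (S : Matrix (Fin n) (Fin n) 𝕜) :
    (1 + (M + Sᴴ * S)).det = (1 + M).det * (1 + S * (1 + M)⁻¹ * Sᴴ).det := by
  have hu := (Matrix.isUnit_iff_isUnit_det _).1 (posDef_one_add hM).isUnit
  rw [Matrix.mul_assoc, Matrix.det_one_add_mul_comm S, ← Matrix.det_mul, Matrix.mul_add,
    Matrix.mul_one, Matrix.mul_assoc, Matrix.mul_nonsing_inv_cancel_left _ _ hu, add_assoc]

/-- `M ↦ det (1 + M)` is monotone on positive semidefinite matrices. -/
lemma det_one_add_le_det_one_add {M N : Matrix (Fin n) (Fin n) 𝕜} (hM : M.PosSemidef)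
    (h : (N - M).PosSemidef) : (1 + M).det ≤ (1 + N).det := by
  obtain ⟨S, hS⟩ := exists_factor_of_posSemidef h
  obtain rfl : N = M + Sᴴ * S := by rw [← hS]; abel
  rw [det_one_add_add_conjTranspose_mul_self hM]
  exact le_mul_of_one_le_right (zero_le_one.trans (one_le_det_one_add hM))
    (one_le_det_one_add ((posDef_one_add hM).inv.posSemidef.mul_mul_conjTranspose_same S))

lemma posSemidef_one_sub_inv {M : Matrix (Fin n) (Fin n) 𝕜} (hM : M.PosSemidef) :
    (1 - (1 + M)⁻¹).PosSemidef := by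
  have hu := (Matrix.isUnit_iff_isUnit_det _).1 (posDef_one_add hM).isUnit
  have hH : ((1 + M)⁻¹)ᴴ = (1 + M)⁻¹ := (posDef_one_add hM).inv.isHermitian.eq
  have hP : (M + Mᴴ * M).PosSemidef := hM.add (Matrix.posSemidef_conjTranspose_mul_self M)
  have := hP.mul_mul_conjTranspose_same (1 + M)⁻¹
  rw [hH, hM.isHermitian.eq] at this
  convert this using 1
  have h1 : M + M * M = (1 + M) * M := by rw [Matrix.add_mul, Matrix.one_mul]
  rw [h1, Matrix.nonsing_inv_mul_cancel_left _ _ hu]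
  nth_rewrite 1 [← Matrix.mul_nonsing_inv _ hu]
  rw [Matrix.add_mul, Matrix.one_mul]; abel

/-- Subadditivity of `log det (1 + ·)` on positive semidefinite matrices. -/
lemma det_one_add_add_le {M N : Matrix (Fin n) (Fin n) 𝕜} (hM : M.PosSemidef)
    (hN : N.PosSemidef) : (1 + (M + N)).det ≤ (1 + M).det * (1 + N).det := by
  obtain ⟨S, rfl⟩ := exists_factor_of_posSemidef hN
  rw [det_one_add_add_conjTranspose_mul_self hM, Matrix.det_one_add_mul_comm Sᴴ]
  refine mul_le_mul_of_nonneg_left ?_ (zero_le_one.trans (one_le_det_one_add hM))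
  refine det_one_add_le_det_one_add
    ((posDef_one_add hM).inv.posSemidef.mul_mul_conjTranspose_same S) ?_
  have := (posSemidef_one_sub_inv hM).mul_mul_conjTranspose_same S
  rwa [Matrix.mul_sub, Matrix.sub_mul, Matrix.mul_one] at this

/-- Compression by an orthogonal projection decreases `det (1 + ·)`. -/
lemma det_one_add_compress_le {M E : Matrix (Fin n) (Fin n) 𝕜} (hM : M.PosSemidef)
    (hE : E.PosSemidef) (hEE : E * E = E) (hE1 : (1 - E).PosSemidef) :
    (1 + E * M * E).det ≤ (1 + M).det := by
  obtain ⟨S, rfl⟩ := exists_factor_of_posSemidef hM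
  have h1 : (1 + E * (Sᴴ * S) * E).det = (1 + S * E * Sᴴ).det := by
    rw [show E * (Sᴴ * S) * E = E * Sᴴ * (S * E) by simp only [Matrix.mul_assoc],
      Matrix.det_one_add_mul_comm,
      show S * E * (E * Sᴴ) = S * (E * E) * Sᴴ by simp only [Matrix.mul_assoc], hEE]
  rw [h1, Matrix.det_one_add_mul_comm Sᴴ]
  refine det_one_add_le_det_one_add (hE.mul_mul_conjTranspose_same S) ?_
  have := hE1.mul_mul_conjTranspose_same S
  rwa [Matrix.mul_sub, Matrix.sub_mul, Matrix.mul_one] at this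

/-- Multiplicative bound for the positive parts of the spectra of `X = Y + Z`. -/
lemma prod_one_add_posPart_le (U V W : Matrix.unitaryGroup (Fin n) 𝕜) (a b c : Fin n → ℝ)
    (h : spectralConj U a = spectralConj V b + spectralConj W c) :
    ∏ i, (1 + max (a i) 0) ≤ (∏ i, (1 + max (b i) 0)) * ∏ i, (1 + max (c i) 0) := by
  set e : Fin n → ℝ := fun i => if 0 < a i then 1 else 0 with he
  have hmaj (V : Matrix.unitaryGroup (Fin n) 𝕜) (b : Fin n → ℝ) :
      (spectralConj V (fun i => max (b i) 0) - spectralConj V b).PosSemidef := by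
    rw [← spectralConj_sub]
    exact spectralConj_posSemidef V fun i => by simp
  have hpos (V : Matrix.unitaryGroup (Fin n) 𝕜) (b : Fin n → ℝ) :
      (spectralConj V (fun i => max (b i) 0)).PosSemidef :=
    spectralConj_posSemidef V fun i => le_max_right _ _
  have hE : (spectralConj U e).PosSemidef :=
    spectralConj_posSemidef U fun i => by simp only [he]; split_ifs <;> simp
  have hEE : spectralConj U e * spectralConj U e = spectralConj U e := by
    rw [spectralConj_mul]; congr 1; ext i; simp [he]
  have hE1 : (1 - spectralConj U e).PosSemidef := by
    have h1 := spectralConj_const U 1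
    rw [RCLike.ofReal_one, one_smul] at h1
    rw [← h1, ← spectralConj_sub]
    exact spectralConj_posSemidef U fun i => by simp only [he, Pi.sub_apply]; split_ifs <;> simp
  have hEX : spectralConj U (fun i => max (a i) 0) =
      spectralConj U e * spectralConj U a * spectralConj U e := by
    rw [spectralConj_mul, spectralConj_mul]
    congr 1
    ext i
    simp only [he, Pi.mul_apply]
    split_ifs with hi
    · simp [hi.le]
    · simp [not_lt.1 hi]
  set Q := spectralConj V (fun i => max (b i) 0)
  set P := spectralConj W (fun i => max (c i) 0)
  have key : (1 + spectralConj U (fun i => max (a i) 0)).det ≤ (1 + Q).det * (1 + P).det := by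
    refine le_trans (det_one_add_le_det_one_add (hpos U a) ?_)
      ((det_one_add_compress_le ((hpos V b).add (hpos W c)) hE hEE hE1).trans
        (det_one_add_add_le (hpos V b) (hpos W c)))
    have := ((hmaj V b).add (hmaj W c)).mul_mul_conjTranspose_same (spectralConj U e)
    rw [hE.isHermitian.eq] at this
    rw [hEX, h, ← Matrix.sub_mul, ← Matrix.mul_sub]
    convert this using 3
    abel
  rw [det_one_add_spectralConj, det_one_add_spectralConj, det_one_add_spectralConj,
    ← RCLike.ofReal_mul, RCLike.ofReal_le_ofReal] at key
  exact key

lemma spectralConj_apply (U : Matrix.unitaryGroup (Fin n) 𝕜) (a : Fin n → ℝ) (j k : Fin n) :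
    spectralConj U a j k = ∑ i, (U : Matrix (Fin n) (Fin n) 𝕜) j i * (a i : 𝕜) *
      star ((U : Matrix (Fin n) (Fin n) 𝕜) k i) := by
  simp [spectralConj, Matrix.mul_apply, Matrix.diagonal_apply]

lemma sum_norm_sq_unitary_row (U : Matrix.unitaryGroup (Fin n) 𝕜) (j : Fin n) :
    ∑ i, ‖(U : Matrix (Fin n) (Fin n) 𝕜) j i‖ ^ 2 = 1 := by
  have h := congrFun (congrFun (unitary_mul_conjTranspose U) j) j
  simp only [Matrix.mul_apply, Matrix.conjTranspose_apply, RCLike.star_def, RCLike.mul_conj,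
    Matrix.one_apply_eq] at h
  exact_mod_cast h

lemma sum_norm_sq_unitary_col (U : Matrix.unitaryGroup (Fin n) 𝕜) (i : Fin n) :
    ∑ j, ‖(U : Matrix (Fin n) (Fin n) 𝕜) j i‖ ^ 2 = 1 := by
  have h := congrFun (congrFun (conjTranspose_mul_unitary U) i) i
  simp only [Matrix.mul_apply, Matrix.conjTranspose_apply, RCLike.star_def, RCLike.conj_mul,
    Matrix.one_apply_eq] at h
  exact_mod_cast h

lemma sum_norm_sq_spectralConj_row (U : Matrix.unitaryGroup (Fin n) 𝕜) (a : Fin n → ℝ)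
    (j : Fin n) :
    ∑ k, ‖spectralConj U a j k‖ ^ 2 =
      ∑ i, ‖(U : Matrix (Fin n) (Fin n) 𝕜) j i‖ ^ 2 * a i ^ 2 := by
  have hH : (spectralConj U a)ᴴ = spectralConj U a := by
    rw [spectralConj, Matrix.conjTranspose_mul, Matrix.conjTranspose_mul,
      Matrix.conjTranspose_conjTranspose, Matrix.diagonal_conjTranspose, Matrix.mul_assoc]
    congr 3
    ext i
    simp
  have h : (spectralConj U a * (spectralConj U a)ᴴ) j j = spectralConj U (a * a) j j := by
    rw [hH, spectralConj_mul]
  rw [spectralConj_apply] at h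
  simp only [Matrix.mul_apply, Matrix.conjTranspose_apply, RCLike.star_def, RCLike.mul_conj] at h
  have h2 : ∀ i, (U : Matrix (Fin n) (Fin n) 𝕜) j i * (((a * a) i : ℝ) : 𝕜) *
      (starRingEnd 𝕜) ((U : Matrix (Fin n) (Fin n) 𝕜) j i) =
      ((‖(U : Matrix (Fin n) (Fin n) 𝕜) j i‖ ^ 2 * a i ^ 2 : ℝ) : 𝕜) := by
    intro i
    rw [mul_right_comm, RCLike.mul_conj]
    push_cast [Pi.mul_apply]
    ring
  simp only [h2] at h
  exact_mod_cast h

lemma rpow_sum_le_sum_rpow {ι : Type*} (s : Finset ι) {q : ℝ} (hq : 0 < q) (hq1 : q ≤ 1)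
    (f : ι → ℝ) (hf : ∀ i ∈ s, 0 ≤ f i) : (∑ i ∈ s, f i) ^ q ≤ ∑ i ∈ s, f i ^ q :=
  Finset.le_sum_of_subadditive_on_pred (fun x : ℝ => x ^ q) (fun x => 0 ≤ x)
    (by simp [Real.zero_rpow hq.ne']) (fun _ _ hx hy => Real.rpow_add_le_add_rpow hx hy hq.le hq1)
    (fun _ _ => add_nonneg) f hf

/-- For `0 < p ≤ 2` the Schatten `p`-norm is dominated by the entrywise `ℓ^p` norm. -/
lemma sum_abs_rpow_le_sum_norm_rpow (U : Matrix.unitaryGroup (Fin n) 𝕜) (a : Fin n → ℝ) {p : ℝ}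
    (hp0 : 0 < p) (hp2 : p ≤ 2) :
    ∑ i, |a i| ^ p ≤ ∑ j, ∑ k, ‖spectralConj U a j k‖ ^ p := by
  have hsq {x : ℝ} (hx : 0 ≤ x) : (x ^ 2) ^ (p / 2) = x ^ p := by
    rw [← Real.rpow_natCast, ← Real.rpow_mul hx]
    congr 1
    push_cast
    ring
  calc ∑ i, |a i| ^ p
      = ∑ j, ∑ i, ‖(U : Matrix (Fin n) (Fin n) 𝕜) j i‖ ^ 2 * (a i ^ 2) ^ (p / 2) := by
        rw [Finset.sum_comm]
        refine Finset.sum_congr rfl fun i _ => ?_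
        rw [← Finset.sum_mul, sum_norm_sq_unitary_col, one_mul, ← sq_abs, hsq (abs_nonneg _)]
    _ ≤ ∑ j, (∑ k, ‖spectralConj U a j k‖ ^ 2) ^ (p / 2) := by
        refine Finset.sum_le_sum fun j _ => ?_
        rw [sum_norm_sq_spectralConj_row]
        exact (Real.concaveOn_rpow (p := p / 2) (by linarith) (by linarith)).le_map_sum
          (fun i _ => sq_nonneg _) (sum_norm_sq_unitary_row U j) (fun i _ => sq_nonneg (a i))
    _ ≤ _ := by
        refine Finset.sum_le_sum fun j _ => ?_
        refine (rpow_sum_le_sum_rpow _ (by linarith) (by linarith) _ fun _ _ => sq_nonneg _).trans ?_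
        exact (Finset.sum_congr rfl fun k _ => hsq (norm_nonneg _)).le

/-- One-sided Rotfel'd inequality for the positive parts of the spectra of `X = Y + Z`. -/
lemma sum_posPart_rpow_le {p : ℝ} (hp0 : 0 < p) (hp1 : p < 1)
    (U V W : Matrix.unitaryGroup (Fin n) 𝕜) (a b c : Fin n → ℝ)
    (h : spectralConj U a = spectralConj V b + spectralConj W c) :
    ∑ i, max (a i) 0 ^ p ≤ (∑ i, max (b i) 0 ^ p) + ∑ i, max (c i) 0 ^ p := by
  have key := sum_rpow_le_of_log_le (s := Finset.univ) (t := Finset.univ) hp0 hp1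
    (a := fun i => max (a i) 0)
    (b := Sum.elim (fun i => max (b i) 0) (fun i => max (c i) 0))
    (fun i _ => le_max_right _ _) (by rintro (i | i) _ <;> exact le_max_right _ _) ?_
  · simpa using key
  intro r hr
  have hprod := prod_one_add_posPart_le U V W (fun i => r * a i) (fun i => r * b i)
    (fun i => r * c i) (by simp only [← smul_spectralConj, h, smul_add])
  have hmax (x : ℝ) : max (r * x) 0 = r * max x 0 := by
    rw [mul_max_of_nonneg _ _ hr.le, mul_zero]
  have hpos (x : ℝ) : 0 < 1 + r * max x 0 := by
    have := mul_nonneg hr.le (le_max_right x 0)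
    linarith
  simp only [hmax] at hprod
  have hlog := Real.log_le_log (Finset.prod_pos fun i _ => hpos (a i)) hprod
  rw [Real.log_mul (Finset.prod_pos fun i _ => hpos (b i)).ne'
    (Finset.prod_pos fun i _ => hpos (c i)).ne', Real.log_prod fun i _ => (hpos (a i)).ne',
    Real.log_prod fun i _ => (hpos (b i)).ne', Real.log_prod fun i _ => (hpos (c i)).ne'] at hlog
  simpa using hlog

lemma hermMat_eq_spectralConj (A : HermMat 𝕜 n) :
    (A : Matrix (Fin n) (Fin n) 𝕜) =
      spectralConj (herm_isHermitian A).eigenvectorUnitary (eigs A) :=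
  isHermitian_eq_spectralConj (herm_isHermitian A)

lemma sum_posPart_sub_eigs_le {p : ℝ} (hp0 : 0 < p) (hp1 : p < 1) (A B : HermMat 𝕜 n) (t : ℝ) :
    (∑ i, max (t - eigs A i) 0 ^ p) ≤
        (∑ i, max (t - eigs B i) 0 ^ p) + ∑ i, |eigs (A - B) i| ^ p ∧
      (∑ i, max (t - eigs B i) 0 ^ p) ≤
        (∑ i, max (t - eigs A i) 0 ^ p) + ∑ i, |eigs (A - B) i| ^ p := by
  set U := (herm_isHermitian A).eigenvectorUnitary
  set V := (herm_isHermitian B).eigenvectorUnitary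
  set W := (herm_isHermitian (A - B)).eigenvectorUnitary
  have hshift (A : HermMat 𝕜 n) : spectralConj (herm_isHermitian A).eigenvectorUnitary
      (fun i => t - eigs A i) = (t : 𝕜) • (1 : Matrix (Fin n) (Fin n) 𝕜) - A := by
    conv_rhs => rw [hermMat_eq_spectralConj A,
      ← spectralConj_const (herm_isHermitian A).eigenvectorUnitary, ← spectralConj_sub]
    rfl
  have hdiff : spectralConj W (eigs (A - B)) = (A : Matrix (Fin n) (Fin n) 𝕜) - B :=
    (hermMat_eq_spectralConj (A - B)).symm
  have hneg : spectralConj W (fun i => -1 * eigs (A - B) i) =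
      (B : Matrix (Fin n) (Fin n) 𝕜) - A := by
    rw [← smul_spectralConj, hdiff]
    simp
  constructor
  · refine (sum_posPart_rpow_le hp0 hp1 U V W _ _ _
      (by rw [hshift A, hshift B, hneg]; abel)).trans ?_
    gcongr with i
    exact max_le (by simpa using neg_le_abs (eigs (A - B) i)) (abs_nonneg _)
  · refine (sum_posPart_rpow_le hp0 hp1 V U W _ _ _
      (by rw [hshift A, hshift B, hdiff]; abel)).trans ?_
    gcongr with i
    exact max_le (le_abs_self _) (abs_nonneg _)

lemma stieltjesT_specMeasure (A : HermMat 𝕜 n) (z : ℂ) :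
    stieltjesT (specMeasure A) z = (n : ℂ)⁻¹ * ∑ i, (z - eigs A i)⁻¹ := by
  rw [stieltjesT, specMeasure, integral_smul_measure,
    integral_finsetSum_measure fun i _ => integrable_dirac (by simp)]
  simp

end MatrixInequalities

/-- Lemma (spectral variation inequalities for `p ∈ (0,1)`: Rotfel'd-type bound and
Stieltjes-transform distance bound). -/
theorem spectral_variation_p_lt_one
    (p : ℝ) (hp0 : 0 < p) (hp1 : p < 1) (n : ℕ) (A B : HermMat 𝕜 n) :
    -- Rotfel'd-type inequality
    (∀ t : ℝ,
      |(∑ i, max (t - eigs A i) 0 ^ p) - ∑ i, max (t - eigs B i) 0 ^ p| ≤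
        ∑ i, |eigs (A - B) i| ^ p) ∧
    -- Stieltjes-transform distance bound
    (∀ z : ℂ, 2 ≤ z.im →
      ‖stieltjesT (specMeasure A) z - stieltjesT (specMeasure B) z‖ ≤
        (Cp p / n) * matLpNormPow p (A - B)) := by
  have hR : ∀ t : ℝ,
      |(∑ i, max (t - eigs A i) 0 ^ p) - ∑ i, max (t - eigs B i) 0 ^ p| ≤
        ∑ i, |eigs (A - B) i| ^ p := fun t => by
    obtain ⟨h1, h2⟩ := sum_posPart_sub_eigs_le hp0 hp1 A B t
    rw [abs_le]
    constructor <;> linarith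
  refine ⟨hR, fun z hz => ?_⟩
  have hS : ∑ i, |eigs (A - B) i| ^ p ≤ matLpNormPow p (A - B) := by
    have h := sum_abs_rpow_le_sum_norm_rpow (herm_isHermitian (A - B)).eigenvectorUnitary
      (eigs (A - B)) hp0 (by linarith)
    rwa [← hermMat_eq_spectralConj] at h
  have hS0 : 0 ≤ ∑ i, |eigs (A - B) i| ^ p := (abs_nonneg _).trans (hR 0)
  have hC : (p + 1) * (Real.pi / 2) ≤ Cp p := by
    have h1 : Real.pi / 2 ≤ √Real.pi := by
      rw [Real.le_sqrt' (by positivity)]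
      nlinarith [Real.pi_pos, Real.pi_le_four]
    calc (p + 1) * (Real.pi / 2) ≤ (p + 1) * √Real.pi := by gcongr
      _ ≤ (p + 1) * √Real.pi * (Real.Gamma ((p + 1) / 2) / Real.Gamma (1 + p / 2)) :=
        le_mul_of_one_le_right (by positivity) (one_le_Gamma_div_Gamma hp0 hp1)
      _ = Cp p := by rw [Cp]; ring
  have hsum := norm_sum_inv_sub_le Finset.univ hp0 hz (eigs A) (eigs B) hR
  rw [stieltjesT_specMeasure, stieltjesT_specMeasure, ← mul_sub, norm_mul, norm_inv,
    Complex.norm_natCast]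
  calc (n : ℝ)⁻¹ * ‖(∑ i, (z - eigs A i)⁻¹) - ∑ i, (z - eigs B i)⁻¹‖
      ≤ (n : ℝ)⁻¹ * ((p + 1) * ((∑ i, |eigs (A - B) i| ^ p) * (Real.pi / 2))) := by gcongr
    _ = (n : ℝ)⁻¹ * ((p + 1) * (Real.pi / 2) * ∑ i, |eigs (A - B) i| ^ p) := by ring
    _ ≤ (n : ℝ)⁻¹ * (Cp p * matLpNormPow p (A - B)) := by
        refine mul_le_mul_of_nonneg_left (mul_le_mul hC hS hS0 ?_) (by positivity)
        exact le_trans (by positivity) hC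
    _ = Cp p / n * matLpNormPow p (A - B) := by ring

end
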